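/- Poincaré–Sobolev inequality with asymmetric seminorm: let 1 ≤ p < ∞, 0 < s < 1, and q an exponent with p ≤ q ≤ p^*_s when sp < N (with q < ∞ if sp = N, q ≤ ∞ if sp > N). Then for every ball B_r(x_0) and every u ∈ C^∞_0(B_r(x_0)), ‖u‖^p_{L^q(B_r(x_0))} ≤ (2/λ^s_{p,q}(B_1)) · r^{sp − N + Np/q} · ∬_{B_r(x_0)×R^N} |u(x)−u(y)|^p/|x−y|^{N+sp} dx dy. -/

import Mathlib

open MeasureTheory Metric Filter
open scoped ENNReal

noncomputable section

abbrev Euc (N : ℕ) := EuclideanSpace ℝ (Fin N)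

/-- The (p-th power of the) Gagliardo–Slobodeckii seminorm on `ℝ^N`. -/
def gag (N : ℕ) (p s : ℝ) (u : Euc N → ℝ) : ℝ :=
  ∫ z : Euc N × Euc N, |u z.1 - u z.2| ^ p / ‖z.1 - z.2‖ ^ ((N : ℝ) + s * p)

/-- `u ∈ C^∞_0(Ω)`: smooth with compact support contained in `Ω`. -/
def TestOn {N : ℕ} (Ω : Set (Euc N)) (u : Euc N → ℝ) : Prop :=
  ContDiff ℝ (⊤ : ℕ∞) u ∧ HasCompactSupport u ∧ tsupport u ⊆ Ω

/-- The fractional principal frequency `λ^s_{p,q}(Ω)`. -/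
def lam (N : ℕ) (p q s : ℝ) (Ω : Set (Euc N)) : ℝ :=
  sInf { c | ∃ u : Euc N → ℝ, TestOn Ω u ∧ (∫ x in Ω, |u x| ^ q) = 1 ∧ c = gag N p s u }

/-- The homogeneous relative `(s,p)`-capacity of `A` in `E`. -/
def fcap (N : ℕ) (p s : ℝ) (A E : Set (Euc N)) : ℝ :=
  sInf { c | ∃ φ : Euc N → ℝ, TestOn E φ ∧ (∀ x ∈ A, 1 ≤ φ x) ∧ c = gag N p s φ }

/-- The fractional `s`-perimeter of a set `A ⊆ ℝ^N`. -/
def sPer (N : ℕ) (s : ℝ) (A : Set (Euc N)) : ℝ :=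
  ∫ z : Euc N × Euc N,
    |A.indicator (fun _ => (1 : ℝ)) z.1 - A.indicator (fun _ => (1 : ℝ)) z.2| /
      ‖z.1 - z.2‖ ^ ((N : ℝ) + s)

/-- An open set with smooth boundary, described as a regular sublevel set of a smooth function. -/
def SmoothBdry {N : ℕ} (O : Set (Euc N)) : Prop :=
  ∃ f : Euc N → ℝ, ContDiff ℝ (⊤ : ℕ∞) f ∧ O = {x | f x < 0} ∧ ∀ x, f x = 0 → fderiv ℝ f x ≠ 0

/-- The sharp constant in the fractional Sobolev inequality. -/
def sobConst (N : ℕ) (p s : ℝ) : ℝ :=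
  sSup {c | ∃ u : Euc N → ℝ, TestOn Set.univ u ∧ gag N p s u = 1 ∧
    c = (∫ x, |u x| ^ ((N : ℝ) * p / (N - s * p))) ^ (((N : ℝ) - s * p) / N)}

/-- Membership in `W̃^{s,p}_0(Ω)`, the closure of `C^∞_0(Ω)` in `W^{s,p}(ℝ^N)`. -/
def MemW0 (N : ℕ) (p s : ℝ) (Ω : Set (Euc N)) (V : Euc N → ℝ) : Prop :=
  ∃ u : ℕ → Euc N → ℝ, (∀ n, TestOn Ω (u n)) ∧
    Filter.Tendsto (fun n => (∫ x, |u n x - V x| ^ p) + gag N p s (fun x => u n x - V x))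
      Filter.atTop (nhds 0)

/-- The relative (local) `p`-capacity of `A` in `E`. -/
def pcap (N : ℕ) (p : ℝ) (A E : Set (Euc N)) : ℝ :=
  sInf { c | ∃ φ : Euc N → ℝ, TestOn E φ ∧ (∀ x ∈ A, 1 ≤ φ x) ∧
    c = ∫ x in E, ‖fderiv ℝ φ x‖ ^ p }

/-- The sharp constant in the local `p`-Poincaré inequality on `E`. -/
def lamLoc (N : ℕ) (p : ℝ) (E : Set (Euc N)) : ℝ :=
  sInf { c | ∃ u : Euc N → ℝ, TestOn E u ∧ (∫ x in E, |u x| ^ p) = 1 ∧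
    c = ∫ x in E, ‖fderiv ℝ u x‖ ^ p }

/-- The compact set `A ⊆ closure (B_r(x0))` is `(s,p,γ)`-negligible. -/
def Negligible (N : ℕ) (p s γ : ℝ) (x0 : Euc N) (r : ℝ) (A : Set (Euc N)) : Prop :=
  fcap N p s A (ball x0 (2 * r)) ≤ γ * fcap N p s (closedBall x0 r) (ball x0 (2 * r))

/-- The fractional `(p,γ)`-capacitary inradius of order `s` of `Ω` (valued in `ℝ≥0∞`). -/
def capInr (N : ℕ) (p s γ : ℝ) (Ω : Set (Euc N)) : ℝ≥0∞ :=
  sSup {R | ∃ r : ℝ, 0 < r ∧ R = ENNReal.ofReal r ∧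
    ∃ x0 : Euc N, Negligible N p s γ x0 r (closedBall x0 r \ Ω)}

end

/-
If `u` vanishes off `A`, the Gagliardo kernel of `u` vanishes off `(A × ℝ^N) ∪ (ℝ^N × A)`, so by
symmetry the full seminorm is at most twice the asymmetric integral over `A × ℝ^N`. Homogeneity and
dilation then bring `u` into the competition defining `λ` on the unit ball.

Division by `λ` requires `λ > 0`. Comparing `u` with its value at `x` on a ball whose radius is
adapted to `|u x|` gives, with `k = p + (sp / N) q`,
`|u x| ^ k ≤ C ‖u‖_q ^ (spq / N) ∫ |u x - u y| ^ p / |x - y| ^ (N + sp) dy`,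
and `q ≤ k` is exactly `q ≤ p^*_s` when `sp < N`. Where `|u| > δ` this controls `|u| ^ q` by
`δ ^ (q - k) |u| ^ k`; where `|u| ≤ δ` the integral of `|u| ^ q` is small because the domain has
finite measure.
-/

section Kernel

variable {E F : Type*} [NormedAddCommGroup E] [NormedAddCommGroup F] {p α : ℝ} {u : E → F}

/-- The Gagliardo kernel `‖u x - u y‖ ^ p / ‖x - y‖ ^ α` of `u` at `z = (x, y)`, whose integral over
`E × E` is the `p`-th power of a Gagliardo seminorm. On the diagonal it vanishes when `0 < p`. -/
noncomputable def gagKernel (p α : ℝ) (u : E → F) (z : E × E) : ℝ :=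
  ‖u z.1 - u z.2‖ ^ p / ‖z.1 - z.2‖ ^ α

lemma gagKernel_nonneg (p α : ℝ) (u : E → F) (z : E × E) : 0 ≤ gagKernel p α u z := by
  unfold gagKernel
  positivity

lemma gagKernel_swap (p α : ℝ) (u : E → F) (z : E × E) :
    gagKernel p α u z.swap = gagKernel p α u z := by
  simp only [gagKernel, Prod.fst_swap, Prod.snd_swap, norm_sub_rev]

lemma gagKernel_const_smul [NormedSpace ℝ F] (p α c : ℝ) (u : E → F) (z : E × E) :
    gagKernel p α (c • u) z = |c| ^ p * gagKernel p α u z := by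
  simp only [gagKernel, Pi.smul_apply, ← smul_sub, norm_smul, Real.norm_eq_abs]
  rw [Real.mul_rpow (abs_nonneg c) (norm_nonneg _), mul_div_assoc]

lemma gagKernel_comp_add_smul [NormedSpace ℝ E] (p α : ℝ) (u : E → F) (a : E) {r : ℝ} (hr : 0 < r)
    (z : E × E) :
    gagKernel p α (fun y => u (a + r • y)) z = r ^ α * gagKernel p α u ((a, a) + r • z) := by
  have hrα : r ^ α ≠ 0 := (Real.rpow_pos_of_pos hr α).ne'
  simp only [gagKernel, Prod.fst_add, Prod.snd_add, Prod.smul_fst, Prod.smul_snd,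
    add_sub_add_left_eq_sub, ← smul_sub, norm_smul, Real.norm_of_nonneg hr.le]
  rw [Real.mul_rpow hr.le (norm_nonneg _), ← mul_div_assoc, mul_div_mul_left _ _ hrα]

lemma gagKernel_le_indicator_add_indicator (hp : p ≠ 0) {A : Set E} (hu : ∀ x ∉ A, u x = 0)
    (z : E × E) :
    gagKernel p α u z ≤ (A ×ˢ Set.univ).indicator (gagKernel p α u) z +
      (A ×ˢ Set.univ).indicator (gagKernel p α u) z.swap := by
  have hnonneg : ∀ w, 0 ≤ (A ×ˢ Set.univ).indicator (gagKernel p α u) w :=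
    Set.indicator_nonneg fun w _ => gagKernel_nonneg p α u w
  by_cases h₁ : z.1 ∈ A
  · rw [Set.indicator_of_mem (show z ∈ A ×ˢ Set.univ from ⟨h₁, trivial⟩)]
    exact le_add_of_nonneg_right (hnonneg _)
  by_cases h₂ : z.2 ∈ A
  · rw [Set.indicator_of_mem (show z.swap ∈ A ×ˢ Set.univ from ⟨h₂, trivial⟩), gagKernel_swap]
    exact le_add_of_nonneg_left (hnonneg _)
  have hzero : gagKernel p α u z = 0 := by simp [gagKernel, hu _ h₁, hu _ h₂, hp]
  exact hzero.trans_le (add_nonneg (hnonneg _) (hnonneg _))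

lemma gagKernel_le_of_lipschitzWith (hp : 0 ≤ p) {K : NNReal} (hK : LipschitzWith K u) {C : ℝ}
    (hC : ∀ x, ‖u x‖ ≤ C) (x y : E) :
    gagKernel p α u (x, y) ≤ min (K * ‖x - y‖) (2 * C) ^ p / ‖x - y‖ ^ α := by
  have hmin : ‖u x - u y‖ ≤ min (K * ‖x - y‖) (2 * C) :=
    le_min (hK.norm_sub_le x y) ((norm_sub_le _ _).trans (by linarith [hC x, hC y]))
  unfold gagKernel
  gcongr

lemma measurable_gagKernel [MeasurableSpace E] [BorelSpace E] [SecondCountableTopology E]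
    (hu : Continuous u) : Measurable (gagKernel p α u) := by
  have hnum : Measurable fun z : E × E => ‖u z.1 - u z.2‖ :=
    (Continuous.norm (by fun_prop)).measurable
  have hden : Measurable fun z : E × E => ‖z.1 - z.2‖ := (Continuous.norm (by fun_prop)).measurable
  exact (hnum.pow_const p).div (hden.pow_const α)

lemma integral_gagKernel_le_two_mul [MeasurableSpace E] {μ : Measure E} [SFinite μ] (hp : p ≠ 0)
    {A : Set E} (hA : MeasurableSet A) (hu : ∀ x ∉ A, u x = 0)
    (hint : Integrable (gagKernel p α u) (μ.prod μ)) :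
    ∫ z, gagKernel p α u z ∂μ.prod μ ≤ 2 * ∫ x in A, ∫ y, gagKernel p α u (x, y) ∂μ ∂μ := by
  have hAuniv : MeasurableSet (A ×ˢ (Set.univ : Set E)) := hA.prod .univ
  set f := (A ×ˢ Set.univ).indicator (gagKernel p α u) with hf
  have hfint : Integrable f (μ.prod μ) := hint.indicator hAuniv
  have hfswap : Integrable (fun z => f z.swap) (μ.prod μ) := hfint.swap
  calc ∫ z, gagKernel p α u z ∂μ.prod μ ≤ ∫ z, (f z + f z.swap) ∂μ.prod μ :=
        integral_mono hint (hfint.add hfswap) (gagKernel_le_indicator_add_indicator hp hu)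
    _ = 2 * ∫ z, f z ∂μ.prod μ := by
        rw [integral_add hfint hfswap, integral_prod_swap f, two_mul]
    _ = 2 * ∫ x in A, ∫ y, gagKernel p α u (x, y) ∂μ ∂μ := by
        rw [hf, integral_indicator hAuniv, setIntegral_prod _ hint.integrableOn,
          Measure.restrict_univ]

end Kernel

section Integrability

open Module Asymptotics

lemma integrableOn_rpow_mul_min_rpow_div_rpow {p α β L M : ℝ} (hp : 0 ≤ p) (hβα : β < α)
    (hαβ : α < β + p) (hL : 0 ≤ L) (hM : 0 ≤ M) :
    IntegrableOn (fun t : ℝ => t ^ (β - 1) * (min (L * t) M ^ p / t ^ α)) (Set.Ioi 0) := by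
  refine mellin_convergent_of_isBigO_scalar (a := α) (b := α - p) ?_ ?_ hβα ?_ (by linarith)
  · refine ContinuousOn.locallyIntegrableOn (fun t (ht : 0 < t) => ?_) measurableSet_Ioi
    have hmin : ContinuousAt (fun t : ℝ => min (L * t) M ^ p) t :=
      ContinuousAt.rpow_const (by fun_prop) (Or.inr hp)
    exact (hmin.div (Real.continuousAt_rpow_const t α (Or.inl ht.ne'))
      (Real.rpow_pos_of_pos ht α).ne').continuousWithinAt
  · refine IsBigO.of_bound (M ^ p) ?_
    filter_upwards [eventually_gt_atTop 0] with t ht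
    have : 0 ≤ min (L * t) M := le_min (by positivity) hM
    rw [Real.norm_of_nonneg (by positivity), Real.norm_of_nonneg (by positivity),
      Real.rpow_neg ht.le, ← div_eq_mul_inv]
    gcongr
    exact min_le_right _ _
  · refine IsBigO.of_bound (L ^ p) ?_
    filter_upwards [self_mem_nhdsWithin] with t (ht : 0 < t)
    have : 0 ≤ min (L * t) M := le_min (by positivity) hM
    rw [Real.norm_of_nonneg (by positivity), Real.norm_of_nonneg (by positivity), neg_sub,
      Real.rpow_sub ht, ← mul_div_assoc, ← Real.mul_rpow hL ht.le]
    gcongr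
    exact min_le_left _ _

variable {E F : Type*} [NormedAddCommGroup E] [NormedSpace ℝ E] [FiniteDimensional ℝ E]
  [Nontrivial E] [MeasurableSpace E] [BorelSpace E] {μ : Measure E} [μ.IsAddHaarMeasure]
  [NormedAddCommGroup F] {p α : ℝ} {u : E → F}

lemma integrable_min_rpow_div_norm_rpow {L M : ℝ} (hp : 0 ≤ p) (hα : finrank ℝ E < α)
    (hαp : α < finrank ℝ E + p) (hL : 0 ≤ L) (hM : 0 ≤ M) :
    Integrable (fun h : E => min (L * ‖h‖) M ^ p / ‖h‖ ^ α) μ := by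
  rw [integrable_fun_norm_addHaar μ (f := fun t : ℝ => min (L * t) M ^ p / t ^ α)]
  refine (integrableOn_rpow_mul_min_rpow_div_rpow hp hα hαp hL hM).congr_fun (fun t _ => ?_)
    measurableSet_Ioi
  rw [smul_eq_mul, ← Real.rpow_natCast t, Nat.cast_pred finrank_pos]

lemma integrable_gagKernel (hp : 0 < p) (hα : finrank ℝ E < α) (hαp : α < finrank ℝ E + p)
    {K : NNReal} (hK : LipschitzWith K u) (hu : HasCompactSupport u) :
    Integrable (gagKernel p α u) (μ.prod μ) := by
  obtain ⟨C, hC⟩ := hu.exists_bound_of_continuous hK.continuous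
  have hC0 : 0 ≤ 2 * C := by linarith [(norm_nonneg _).trans (hC 0)]
  set A := tsupport u
  have hA : MeasurableSet A := (isClosed_tsupport u).measurableSet
  have hAint : Integrable (A.indicator fun _ => (1 : ℝ)) μ :=
    (integrable_indicator_iff hA).2 (integrableOn_const hu.isCompact.measure_lt_top.ne)
  set k : E → ℝ := fun h => min (K * ‖h‖) (2 * C) ^ p / ‖h‖ ^ α
  have hk : Integrable k μ := integrable_min_rpow_div_norm_rpow hp.le hα hαp K.2 hC0
  have hprod : Integrable (fun z : E × E => A.indicator (fun _ => (1 : ℝ)) z.2 * k (z.1 - z.2))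
      (μ.prod μ) :=
    hAint.convolution_integrand (ContinuousLinearMap.mul ℝ ℝ) hk
  have hmeas := measurable_gagKernel (p := p) (α := α) hK.continuous
  have hind : Integrable ((A ×ˢ Set.univ).indicator (gagKernel p α u)) (μ.prod μ) := by
    refine hprod.swap.mono' (hmeas.indicator (hA.prod .univ)).aestronglyMeasurable (.of_forall ?_)
    rintro ⟨x, y⟩
    rw [Real.norm_of_nonneg (Set.indicator_nonneg (fun z _ => gagKernel_nonneg p α u z) _)]
    by_cases hx : x ∈ A
    · simpa [hx, k, norm_sub_rev y x] using gagKernel_le_of_lipschitzWith hp.le hK hC x y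
    · simp [hx]
  refine (hind.add hind.swap).mono' hmeas.aestronglyMeasurable (.of_forall fun z => ?_)
  rw [Real.norm_of_nonneg (gagKernel_nonneg p α u z)]
  exact gagKernel_le_indicator_add_indicator hp.ne' (fun x => image_eq_zero_of_notMem_tsupport) z

end Integrability

section PointwiseEstimate

open Module

lemma one_le_gagKernel_add_rpow {E F : Type*} [NormedAddCommGroup E] [NormedAddCommGroup F]
    {p q α R : ℝ} (hp : 0 ≤ p) (hq : 0 ≤ q) (hα : 0 ≤ α) {u : E → F} {x y : E} (hx : u x ≠ 0)
    (hy : ‖x - y‖ ≤ R) :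
    1 ≤ (2 / ‖u x‖) ^ p * R ^ α * gagKernel p α u (x, y) + (2 / ‖u x‖) ^ q * ‖u y‖ ^ q := by
  have hux : 0 < ‖u x‖ := norm_pos_iff.2 hx
  have hR : 0 ≤ R := (norm_nonneg _).trans hy
  have hk := gagKernel_nonneg p α u (x, y)
  have one_le {a e : ℝ} (ha : ‖u x‖ / 2 ≤ a) (he : 0 ≤ e) : 1 ≤ (2 / ‖u x‖) ^ e * a ^ e := by
    rw [← Real.mul_rpow (by positivity) (by linarith)]
    refine Real.one_le_rpow ?_ he
    rw [div_mul_eq_mul_div, le_div_iff₀ hux]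
    linarith
  rcases le_or_gt (‖u x‖ / 2) ‖u y‖ with hlarge | hsmall
  · exact (one_le hlarge hq).trans (le_add_of_nonneg_left (by positivity))
  have hdiff : ‖u x‖ / 2 ≤ ‖u x - u y‖ := by linarith [norm_sub_norm_le (u x) (u y)]
  have hxy : 0 < ‖x - y‖ := norm_sub_pos_iff.2 fun h => by subst h; linarith
  have hker : ‖u x - u y‖ ^ p ≤ R ^ α * gagKernel p α u (x, y) := by
    rw [gagKernel, ← mul_div_assoc, le_div_iff₀ (by positivity), mul_comm]
    gcongr
  calc 1 ≤ (2 / ‖u x‖) ^ p * ‖u x - u y‖ ^ p := one_le hdiff hp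
    _ ≤ (2 / ‖u x‖) ^ p * R ^ α * gagKernel p α u (x, y) := by
        rw [mul_assoc]
        gcongr
    _ ≤ _ := le_add_of_nonneg_right (by positivity)

variable {E F : Type*} [NormedAddCommGroup E] [NormedSpace ℝ E] [FiniteDimensional ℝ E]
  [MeasurableSpace E] [BorelSpace E] {μ : Measure E} [μ.IsAddHaarMeasure]
  [NormedAddCommGroup F] {p q α : ℝ} {u : E → F} {x : E}

lemma measureReal_closedBall_le (hp : 0 ≤ p) (hq : 0 ≤ q) (hα : 0 ≤ α) (hx : u x ≠ 0)
    (huq : Integrable (fun y => ‖u y‖ ^ q) μ)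
    (hker : Integrable (fun y => gagKernel p α u (x, y)) μ) {R : ℝ}
    (hR : 0 ≤ R) :
    μ.real (closedBall x R) ≤ (2 / ‖u x‖) ^ p * R ^ α * ∫ y, gagKernel p α u (x, y) ∂μ +
      (2 / ‖u x‖) ^ q * ∫ y, ‖u y‖ ^ q ∂μ := by
  have hkint := hker.const_mul ((2 / ‖u x‖) ^ p * R ^ α)
  have huint := huq.const_mul ((2 / ‖u x‖) ^ q)
  have hnonneg (y : E) : 0 ≤ (2 / ‖u x‖) ^ p * R ^ α * gagKernel p α u (x, y) +
      (2 / ‖u x‖) ^ q * ‖u y‖ ^ q := by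
    have := gagKernel_nonneg p α u (x, y)
    positivity
  calc μ.real (closedBall x R) = ∫ _ in closedBall x R, (1 : ℝ) ∂μ := by simp
    _ ≤ ∫ y in closedBall x R, ((2 / ‖u x‖) ^ p * R ^ α * gagKernel p α u (x, y) +
          (2 / ‖u x‖) ^ q * ‖u y‖ ^ q) ∂μ :=
        setIntegral_mono_on (integrableOn_const measure_closedBall_lt_top.ne)
          (hkint.add huint).integrableOn measurableSet_closedBall fun y hy =>
            one_le_gagKernel_add_rpow hp hq hα hx (mem_closedBall_iff_norm'.1 hy)
    _ ≤ ∫ y, ((2 / ‖u x‖) ^ p * R ^ α * gagKernel p α u (x, y) +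
          (2 / ‖u x‖) ^ q * ‖u y‖ ^ q) ∂μ :=
        setIntegral_le_integral (hkint.add huint) (.of_forall hnonneg)
    _ = _ := by rw [integral_add hkint huint, integral_const_mul, integral_const_mul]

-- The radius is chosen so that the ball has twice the Chebyshev bound for the measure of
-- `{y | ‖u x‖ / 2 ≤ ‖u y‖}`; on at least half of it `‖u x - u y‖ ≥ ‖u x‖ / 2`.
lemma two_div_norm_rpow_mul_integral_le [Nontrivial E] (hp : 0 ≤ p) (hq : 0 ≤ q) (hα : 0 ≤ α)
    (hx : u x ≠ 0) (huq : Integrable (fun y => ‖u y‖ ^ q) μ)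
    (hker : Integrable (fun y => gagKernel p α u (x, y)) μ) :
    (2 / ‖u x‖) ^ q * ∫ y, ‖u y‖ ^ q ∂μ ≤ (2 / ‖u x‖) ^ p *
      (2 / μ.real (ball 0 1) * ((2 / ‖u x‖) ^ q * ∫ y, ‖u y‖ ^ q ∂μ)) ^ (α / finrank ℝ E) *
        ∫ y, gagKernel p α u (x, y) ∂μ := by
  have hd : (finrank ℝ E : ℝ) ≠ 0 := Nat.cast_ne_zero.2 finrank_pos.ne'
  have hV : 0 < μ.real (ball (0 : E) 1) :=
    ENNReal.toReal_pos (measure_ball_pos μ 0 one_pos).ne' measure_ball_lt_top.ne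
  set V := μ.real (ball (0 : E) 1) with hV_def
  set m := (2 / ‖u x‖) ^ q * ∫ y, ‖u y‖ ^ q ∂μ with hm
  set R := (2 / V * m) ^ (finrank ℝ E : ℝ)⁻¹ with hR
  have hball : μ.real (closedBall x R) = 2 * m := by
    rw [Measure.addHaar_real_closedBall _ _ (by positivity), ← Real.rpow_natCast, ← hV_def, hR,
      Real.rpow_inv_rpow (by positivity) hd, mul_right_comm, div_mul_cancel₀ _ hV.ne']
  have hRα : R ^ α = (2 / V * m) ^ (α / finrank ℝ E) := by
    rw [hR, ← Real.rpow_mul (by positivity), inv_mul_eq_div]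
  have hle := measureReal_closedBall_le hp hq hα hx huq hker (R := R) (by positivity)
  rw [hball, hRα, ← hm] at hle
  linarith

lemma norm_rpow_le_integral_gagKernel [Nontrivial E] (hp : 0 < p) (hq : 0 < q)
    (hα : finrank ℝ E ≤ α) (hI : 0 < ∫ y, ‖u y‖ ^ q ∂μ)
    (hker : Integrable (fun y => gagKernel p α u (x, y)) μ) :
    ‖u x‖ ^ (p + (α / finrank ℝ E - 1) * q) ≤
      2 ^ (p + (α / finrank ℝ E - 1) * q) * (2 / μ.real (ball 0 1)) ^ (α / finrank ℝ E) *
        (∫ y, ‖u y‖ ^ q ∂μ) ^ (α / finrank ℝ E - 1) * ∫ y, gagKernel p α u (x, y) ∂μ := by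
  have hd : (0 : ℝ) < finrank ℝ E := Nat.cast_pos.2 finrank_pos
  have hβ : 0 ≤ α / finrank ℝ E - 1 := sub_nonneg.2 ((one_le_div hd).2 hα)
  have hD : 0 ≤ ∫ y, gagKernel p α u (x, y) ∂μ := integral_nonneg fun y => gagKernel_nonneg p α u _
  rcases eq_or_ne (u x) 0 with hx | hx
  · rw [hx, norm_zero, Real.zero_rpow (by positivity)]
    positivity
  have hmass := two_div_norm_rpow_mul_integral_le hp.le hq.le (hd.le.trans hα) hx
    (.of_integral_ne_zero hI.ne') hker
  have hux : 0 < ‖u x‖ := norm_pos_iff.2 hx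
  set V := μ.real (ball (0 : E) 1)
  set I := ∫ y, ‖u y‖ ^ q ∂μ
  set D := ∫ y, gagKernel p α u (x, y) ∂μ
  set γ := α / (finrank ℝ E : ℝ)
  set b := 2 / ‖u x‖ with hb
  have hb0 : 0 < b := by positivity
  have hpow : (2 / V * (b ^ q * I)) ^ γ =
      (2 / V) ^ γ * (b ^ ((γ - 1) * q) * I ^ (γ - 1)) * (b ^ q * I) := by
    rw [Real.mul_rpow (by positivity) (by positivity), mul_assoc, mul_comm _ q,
      Real.rpow_mul hb0.le, ← Real.mul_rpow (by positivity) hI.le,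
      ← Real.rpow_add_one (by positivity), sub_add_cancel]
  have hone : 1 ≤ b ^ (p + (γ - 1) * q) * ((2 / V) ^ γ * I ^ (γ - 1) * D) := by
    refine le_of_mul_le_mul_right ?_ (show 0 < b ^ q * I by positivity)
    rw [one_mul, Real.rpow_add hb0]
    exact hmass.trans_eq (by rw [hpow]; ring)
  have hub : ‖u x‖ ^ (p + (γ - 1) * q) * b ^ (p + (γ - 1) * q) = 2 ^ (p + (γ - 1) * q) := by
    rw [← Real.mul_rpow hux.le hb0.le, hb, mul_div_cancel₀ _ hux.ne']
  calc ‖u x‖ ^ (p + (γ - 1) * q) ≤ ‖u x‖ ^ (p + (γ - 1) * q) *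
        (b ^ (p + (γ - 1) * q) * ((2 / V) ^ γ * I ^ (γ - 1) * D)) :=
        le_mul_of_one_le_right (by positivity) hone
    _ = _ := by rw [← mul_assoc, hub]; ring

end PointwiseEstimate

section LowerBound

open Module

lemma rpow_le_rpow_add_rpow_sub_mul_rpow {δ t q k : ℝ} (hδ : 0 < δ) (ht : 0 ≤ t) (hq : 0 ≤ q)
    (hqk : q ≤ k) : t ^ q ≤ δ ^ q + δ ^ (q - k) * t ^ k := by
  rcases le_or_gt t δ with h | h
  · exact (Real.rpow_le_rpow ht h hq).trans (le_add_of_nonneg_right (by positivity))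
  · have ht0 : 0 < t := hδ.trans h
    calc t ^ q = t ^ (q - k) * t ^ k := by rw [← Real.rpow_add ht0, sub_add_cancel]
      _ ≤ δ ^ (q - k) * t ^ k := mul_le_mul_of_nonneg_right
          (Real.rpow_le_rpow_of_nonpos hδ h.le (sub_nonpos.2 hqk)) (by positivity)
      _ ≤ _ := le_add_of_nonneg_left (by positivity)

variable {E F : Type*} [NormedAddCommGroup E] [NormedSpace ℝ E] [FiniteDimensional ℝ E]
  [Nontrivial E] [MeasurableSpace E] [BorelSpace E] {μ : Measure E} [μ.IsAddHaarMeasure]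
  [NormedAddCommGroup F] {p q α : ℝ}

lemma integral_norm_rpow_le (hp : 0 < p) (hq : 0 < q) (hα : finrank ℝ E ≤ α)
    (hqk : q ≤ p + (α / finrank ℝ E - 1) * q) {Ω : Set E} (hΩ : μ Ω ≠ ∞) {u : E → F}
    (hu : ∀ x ∉ Ω, u x = 0) (hI : 0 < ∫ y, ‖u y‖ ^ q ∂μ)
    (hker : Integrable (gagKernel p α u) (μ.prod μ)) {δ : ℝ} (hδ : 0 < δ) :
    ∫ x, ‖u x‖ ^ q ∂μ ≤ δ ^ q * μ.real Ω + δ ^ (q - (p + (α / finrank ℝ E - 1) * q)) *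
      (2 ^ (p + (α / finrank ℝ E - 1) * q) * (2 / μ.real (ball 0 1)) ^ (α / finrank ℝ E) *
        (∫ y, ‖u y‖ ^ q ∂μ) ^ (α / finrank ℝ E - 1) * ∫ z, gagKernel p α u z ∂μ.prod μ) := by
  set k := p + (α / finrank ℝ E - 1) * q
  set C := 2 ^ k * (2 / μ.real (ball 0 1)) ^ (α / finrank ℝ E) *
    (∫ y, ‖u y‖ ^ q ∂μ) ^ (α / finrank ℝ E - 1)
  have hC0 : 0 ≤ C := by positivity
  set D : E → ℝ := fun x => ∫ y, gagKernel p α u (x, y) ∂μ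
  have hD0 (x : E) : 0 ≤ D x := integral_nonneg fun y => gagKernel_nonneg p α u _
  have hDint : Integrable D μ := hker.integral_prod_left
  have hconst : IntegrableOn (fun _ => δ ^ q) Ω μ := integrableOn_const hΩ
  have hCD : Integrable (fun x => δ ^ (q - k) * (C * D x)) μ := (hDint.const_mul C).const_mul _
  have hpointwise : ∀ᵐ x ∂μ, ‖u x‖ ^ q ≤ δ ^ q + δ ^ (q - k) * (C * D x) := by
    filter_upwards [hker.prod_right_ae] with x hx
    refine (rpow_le_rpow_add_rpow_sub_mul_rpow hδ (norm_nonneg _) hq.le hqk).trans ?_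
    gcongr
    exact norm_rpow_le_integral_gagKernel hp hq hα hI hx
  calc ∫ x, ‖u x‖ ^ q ∂μ = ∫ x in Ω, ‖u x‖ ^ q ∂μ :=
        (setIntegral_eq_integral_of_forall_compl_eq_zero fun x hx => by
          rw [hu x hx, norm_zero, Real.zero_rpow hq.ne']).symm
    _ ≤ ∫ x in Ω, (δ ^ q + δ ^ (q - k) * (C * D x)) ∂μ :=
        setIntegral_mono_ae (Integrable.of_integral_ne_zero hI.ne').integrableOn
          (hconst.add hCD.integrableOn) hpointwise
    _ = δ ^ q * μ.real Ω + ∫ x in Ω, δ ^ (q - k) * (C * D x) ∂μ := by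
        rw [integral_add hconst hCD.integrableOn, setIntegral_const, smul_eq_mul, mul_comm]
    _ ≤ δ ^ q * μ.real Ω + ∫ x, δ ^ (q - k) * (C * D x) ∂μ := by
        refine add_le_add_right (setIntegral_le_integral hCD (.of_forall fun x => ?_)) _
        exact mul_nonneg (by positivity) (mul_nonneg hC0 (hD0 x))
    _ = _ := by rw [integral_const_mul, integral_const_mul, ← integral_prod _ hker]

lemma exists_pos_le_integral_gagKernel (hp : 0 < p) (hq : 0 < q) (hα : finrank ℝ E ≤ α)
    (hqk : q ≤ p + (α / finrank ℝ E - 1) * q) {Ω : Set E} (hΩ : μ Ω ≠ ∞) :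
    ∃ c > 0, ∀ u : E → F, (∀ x ∉ Ω, u x = 0) → ∫ x, ‖u x‖ ^ q ∂μ = 1 →
      Integrable (gagKernel p α u) (μ.prod μ) → c ≤ ∫ z, gagKernel p α u z ∂μ.prod μ := by
  have hV : 0 < μ.real (ball (0 : E) 1) :=
    ENNReal.toReal_pos (measure_ball_pos μ 0 one_pos).ne' measure_ball_lt_top.ne
  set k := p + (α / finrank ℝ E - 1) * q with hk
  set C := 2 ^ k * (2 / μ.real (ball (0 : E) 1)) ^ (α / finrank ℝ E) with hC
  set δ := (2 * (μ.real Ω + 1))⁻¹ ^ q⁻¹ with hδ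
  have hδ0 : 0 < δ := by positivity
  have hδΩ : δ ^ q * μ.real Ω ≤ 1 / 2 := by
    rw [hδ, Real.rpow_inv_rpow (by positivity) hq.ne', inv_mul_le_iff₀ (by positivity)]
    linarith
  refine ⟨(1 / 2) / (δ ^ (q - k) * C), by positivity, fun u hu hI hker => ?_⟩
  have hle := integral_norm_rpow_le hp hq hα hqk hΩ hu (hI ▸ one_pos) hker hδ0
  rw [hI, Real.one_rpow, mul_one, ← hk, ← hC, ← mul_assoc] at hle
  rw [div_le_iff₀' (by positivity)]
  linarith

end LowerBound
section Dilation

open Module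

variable {E : Type*} [NormedAddCommGroup E] [NormedSpace ℝ E] [FiniteDimensional ℝ E]
  [MeasurableSpace E] [BorelSpace E] {μ : Measure E} [μ.IsAddHaarMeasure]

lemma integral_comp_add_smul {G : Type*} [NormedAddCommGroup G] [NormedSpace ℝ G] (f : E → G)
    (a : E) {r : ℝ} (hr : 0 < r) :
    ∫ x, f (a + r • x) ∂μ = (r ^ finrank ℝ E)⁻¹ • ∫ x, f x ∂μ := by
  rw [Measure.integral_comp_smul μ (fun x => f (a + x)) r, integral_add_left_eq_self,
    abs_of_pos (by positivity)]

lemma integral_gagKernel_comp_add_smul {F : Type*} [NormedAddCommGroup F] (p α : ℝ) (u : E → F)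
    (a : E) {r : ℝ} (hr : 0 < r) :
    ∫ z, gagKernel p α (fun y => u (a + r • y)) z ∂μ.prod μ =
      r ^ (α - 2 * finrank ℝ E) * ∫ z, gagKernel p α u z ∂μ.prod μ := by
  have hpow : r ^ α * (r ^ finrank ℝ (E × E))⁻¹ = r ^ (α - 2 * finrank ℝ E) := by
    rw [finrank_prod, ← two_mul, ← div_eq_mul_inv, ← Real.rpow_natCast, ← Real.rpow_sub hr]
    push_cast
    rfl
  simp_rw [gagKernel_comp_add_smul p α u a hr]
  rw [integral_const_mul, integral_comp_add_smul _ (a, a) hr, smul_eq_mul, ← mul_assoc, hpow]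

end Dilation

section PrincipalFrequency

open scoped Pointwise

variable {N : ℕ} {p q s : ℝ} {Ω : Set (Euc N)} {u : Euc N → ℝ}

lemma TestOn.eq_zero (hu : TestOn Ω u) : ∀ x ∉ Ω, u x = 0 :=
  fun _ hx => image_eq_zero_of_notMem_tsupport fun h => hx (hu.2.2 h)

lemma TestOn.setIntegral_abs_rpow (hu : TestOn Ω u) (hq : q ≠ 0) :
    ∫ x in Ω, |u x| ^ q = ∫ x, |u x| ^ q :=
  setIntegral_eq_integral_of_forall_compl_eq_zero fun x hx => by
    rw [hu.eq_zero x hx, abs_zero, Real.zero_rpow hq]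

lemma TestOn.const_smul (hu : TestOn Ω u) (c : ℝ) : TestOn Ω (c • u) :=
  ⟨hu.1.const_smul c, hu.2.1.smul_left (f := fun _ => c),
    (tsupport_smul_subset_right (fun _ => c) u).trans hu.2.2⟩

lemma TestOn.comp_add_smul {a : Euc N} {r : ℝ} (hr : 0 < r) (hu : TestOn (a +ᵥ r • Ω) u) :
    TestOn Ω fun y => u (a + r • y) := by
  set φ : Euc N ≃ₜ Euc N := (Homeomorph.smulOfNeZero r hr.ne').trans (Homeomorph.addLeft a)
  refine ⟨hu.1.comp (by fun_prop), hu.2.1.comp_homeomorph φ, fun y hy => ?_⟩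
  have htsupport : tsupport (fun y => u (a + r • y)) = φ ⁻¹' tsupport u :=
    tsupport_comp_eq_preimage u φ
  have hφy : a + r • y ∈ a +ᵥ r • Ω := hu.2.2 (htsupport.le hy)
  rwa [← vadd_eq_add, Set.vadd_mem_vadd_set_iff, Set.smul_mem_smul_set_iff₀ hr.ne'] at hφy

lemma TestOn.integrable_gagKernel (hN : 0 < N) (hp : 0 < p) (hs0 : 0 < s) (hs1 : s < 1)
    (hu : TestOn Ω u) : Integrable (gagKernel p (N + s * p) u) := by
  have : NeZero N := ⟨hN.ne'⟩
  obtain ⟨K, hK⟩ := hu.1.lipschitzWith_of_hasCompactSupport hu.2.1 (by simp)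
  refine _root_.integrable_gagKernel hp ?_ ?_ hK hu.2.1 <;> rw [finrank_euclideanSpace_fin]
  · linarith [mul_pos hs0 hp]
  · linarith [mul_lt_of_lt_one_left hp hs1]

lemma gag_nonneg (N : ℕ) (p s : ℝ) (u : Euc N → ℝ) : 0 ≤ gag N p s u :=
  integral_nonneg (gagKernel_nonneg p (N + s * p) u)

lemma gag_const_smul (N : ℕ) (p s c : ℝ) (u : Euc N → ℝ) :
    gag N p s (c • u) = |c| ^ p * gag N p s u := by
  change ∫ z, gagKernel p (N + s * p) (c • u) z = _
  simp_rw [gagKernel_const_smul]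
  exact integral_const_mul _ _

lemma gag_comp_add_smul (p s : ℝ) (u : Euc N → ℝ) (a : Euc N) {r : ℝ} (hr : 0 < r) :
    gag N p s (fun y => u (a + r • y)) = r ^ (s * p - N) * gag N p s u := by
  have h := integral_gagKernel_comp_add_smul (μ := volume) p (N + s * p) u a hr
  rwa [finrank_euclideanSpace_fin, show (N : ℝ) + s * p - 2 * N = s * p - N by ring] at h

lemma lam_nonneg (N : ℕ) (p q s : ℝ) (Ω : Set (Euc N)) : 0 ≤ lam N p q s Ω := by
  refine Real.sInf_nonneg ?_
  rintro _ ⟨v, -, -, rfl⟩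
  exact gag_nonneg N p s v

lemma TestOn.gag_le_two_mul (hN : 0 < N) (hp : 0 < p) (hs0 : 0 < s) (hs1 : s < 1)
    (hΩ : MeasurableSet Ω) (hu : TestOn Ω u) :
    gag N p s u ≤ 2 * ∫ x in Ω, ∫ y, |u x - u y| ^ p / ‖x - y‖ ^ ((N : ℝ) + s * p) :=
  integral_gagKernel_le_two_mul hp.ne' hΩ hu.eq_zero (hu.integrable_gagKernel hN hp hs0 hs1)

lemma TestOn.exists_setIntegral_abs_rpow_eq_one (hq : 0 < q) (hu : TestOn Ω u)
    (hI : 0 < ∫ x in Ω, |u x| ^ q) :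
    ∃ c > 0, c ^ q * (∫ x in Ω, |u x| ^ q) = 1 ∧ TestOn Ω (c • u) ∧
      ∫ x in Ω, |(c • u) x| ^ q = 1 := by
  set I := ∫ x in Ω, |u x| ^ q
  have hc : (I⁻¹ ^ q⁻¹) ^ q * I = 1 := by
    rw [Real.rpow_inv_rpow (by positivity) hq.ne', inv_mul_cancel₀ hI.ne']
  refine ⟨I⁻¹ ^ q⁻¹, by positivity, hc, hu.const_smul _, ?_⟩
  simp_rw [Pi.smul_apply, smul_eq_mul, abs_mul, Real.mul_rpow (abs_nonneg _) (abs_nonneg _)]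
  rw [integral_const_mul, abs_of_pos (by positivity), hc]

lemma TestOn.lam_mul_rpow_le_gag (hp : 0 < p) (hq : 0 < q) (hu : TestOn Ω u) :
    lam N p q s Ω * (∫ x in Ω, |u x| ^ q) ^ (p / q) ≤ gag N p s u := by
  have hI0 : 0 ≤ ∫ x in Ω, |u x| ^ q := integral_nonneg fun x => by positivity
  rcases hI0.eq_or_lt with hI | hI
  · rw [← hI, Real.zero_rpow (by positivity), mul_zero]
    exact gag_nonneg N p s u
  obtain ⟨c, hc, hcI, hcu, hcu_one⟩ := hu.exists_setIntegral_abs_rpow_eq_one hq hI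
  set I := ∫ x in Ω, |u x| ^ q
  have hle : lam N p q s Ω ≤ c ^ p * gag N p s u := by
    rw [← abs_of_pos hc, ← gag_const_smul]
    refine csInf_le ⟨0, ?_⟩ ⟨_, hcu, hcu_one, rfl⟩
    rintro _ ⟨v, -, -, rfl⟩
    exact gag_nonneg N p s v
  have hcp : c ^ p * I ^ (p / q) = 1 := by
    rw [← Real.one_rpow (p / q), ← hcI, Real.mul_rpow (by positivity) hI0, ← Real.rpow_mul hc.le,
      mul_div_cancel₀ _ hq.ne']
  calc lam N p q s Ω * I ^ (p / q) ≤ c ^ p * gag N p s u * I ^ (p / q) := by gcongr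
    _ = gag N p s u := by rw [mul_right_comm, hcp, one_mul]

lemma le_add_mul_of_le_sobolev_exponent {d σ p q : ℝ} (hd : 0 < d) (hp : 0 ≤ p) (hq : 0 ≤ q)
    (hqc : σ < d → q ≤ d * p / (d - σ)) : q ≤ p + ((d + σ) / d - 1) * q := by
  have hqd : q * (d - σ) ≤ d * p := by
    rcases lt_or_ge σ d with h | h
    · exact (le_div_iff₀ (sub_pos.2 h)).1 (hqc h)
    · exact (mul_nonpos_of_nonneg_of_nonpos hq (sub_nonpos.2 h)).trans (by positivity)
  have hdiff : p + ((d + σ) / d - 1) * q - q = (d * p - q * (d - σ)) / d := by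
    field_simp
    ring
  rw [← sub_nonneg, hdiff]
  exact div_nonneg (sub_nonneg.2 hqd) hd.le

lemma TestOn.lam_pos (hN : 0 < N) (hp : 0 < p) (hq : 0 < q) (hs0 : 0 < s) (hs1 : s < 1)
    (hqc : s * p < N → q ≤ N * p / (N - s * p)) (hΩ : volume Ω ≠ ∞) (hu : TestOn Ω u)
    (hI : 0 < ∫ x in Ω, |u x| ^ q) : 0 < lam N p q s Ω := by
  have : NeZero N := ⟨hN.ne'⟩
  obtain ⟨c, hc, hle⟩ := exists_pos_le_integral_gagKernel (F := ℝ) (μ := volume) (E := Euc N)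
    (p := p) (q := q) (α := N + s * p) hp hq
    (by rw [finrank_euclideanSpace_fin]; linarith [mul_pos hs0 hp])
    (by
      rw [finrank_euclideanSpace_fin]
      exact le_add_mul_of_le_sobolev_exponent (Nat.cast_pos.2 hN) hp.le hq.le hqc) hΩ
  obtain ⟨a, -, -, hau, hau_one⟩ := hu.exists_setIntegral_abs_rpow_eq_one hq hI
  refine hc.trans_le (le_csInf ⟨_, a • u, hau, hau_one, rfl⟩ ?_)
  rintro _ ⟨v, hv, hv_one, rfl⟩
  rw [hv.setIntegral_abs_rpow hq.ne'] at hv_one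
  exact hle v hv.eq_zero hv_one (hv.integrable_gagKernel hN hp hs0 hs1)

lemma TestOn.setIntegral_abs_comp_add_smul_rpow (hq : q ≠ 0) {a : Euc N} {r : ℝ} (hr : 0 < r)
    (hu : TestOn (a +ᵥ r • Ω) u) :
    ∫ y in Ω, |u (a + r • y)| ^ q = (r ^ N)⁻¹ * ∫ x in a +ᵥ r • Ω, |u x| ^ q := by
  rw [(hu.comp_add_smul hr).setIntegral_abs_rpow hq, hu.setIntegral_abs_rpow hq,
    integral_comp_add_smul (fun x => |u x| ^ q) a hr, finrank_euclideanSpace_fin, smul_eq_mul]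

lemma TestOn.lam_mul_rpow_le_rpow_mul_gag (hp : 0 < p) (hq : 0 < q) {a : Euc N} {r : ℝ}
    (hr : 0 < r) (hu : TestOn (a +ᵥ r • Ω) u) :
    lam N p q s Ω * (∫ x in a +ᵥ r • Ω, |u x| ^ q) ^ (p / q) ≤
      r ^ (s * p - N + N * p / q) * gag N p s u := by
  set I := ∫ x in a +ᵥ r • Ω, |u x| ^ q
  have hI : 0 ≤ I := integral_nonneg fun x => by positivity
  have hle := (hu.comp_add_smul hr).lam_mul_rpow_le_gag (s := s) hp hq
  rw [hu.setIntegral_abs_comp_add_smul_rpow hq.ne' hr, gag_comp_add_smul p s u a hr] at hle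
  have hr_pow : r ^ (N * p / q) * (r ^ N)⁻¹ ^ (p / q) = 1 := by
    rw [Real.inv_rpow (by positivity), ← Real.rpow_natCast_mul hr.le, mul_div_assoc,
      mul_inv_cancel₀ (by positivity)]
  calc lam N p q s Ω * I ^ (p / q)
      = r ^ (N * p / q) * (lam N p q s Ω * ((r ^ N)⁻¹ * I) ^ (p / q)) := by
        rw [Real.mul_rpow (by positivity) hI]
        linear_combination (-(lam N p q s Ω * I ^ (p / q))) * hr_pow
    _ ≤ r ^ (N * p / q) * (r ^ (s * p - N) * gag N p s u) := by gcongr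
    _ = r ^ (s * p - N + N * p / q) * gag N p s u := by
        rw [← mul_assoc, ← Real.rpow_add hr, add_comm]

theorem stmt16_general (hN : 0 < N) (hp : 0 < p) (hq : 0 < q) (hs0 : 0 < s) (hs1 : s < 1)
    (hqc : s * p < N → q ≤ N * p / (N - s * p)) (hΩ : MeasurableSet Ω) (hΩ_fin : volume Ω ≠ ∞)
    (x0 : Euc N) {r : ℝ} (hr : 0 < r) (hu : TestOn (x0 +ᵥ r • Ω) u) :
    (∫ x in x0 +ᵥ r • Ω, |u x| ^ q) ^ (p / q) ≤
      2 / lam N p q s Ω * r ^ (s * p - N + N * p / q) *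
        ∫ x in x0 +ᵥ r • Ω, ∫ y, |u x - u y| ^ p / ‖x - y‖ ^ ((N : ℝ) + s * p) := by
  have hgag := hu.gag_le_two_mul hN hp hs0 hs1 ((hΩ.const_smul_of_ne_zero hr.ne').const_vadd x0)
  have hI : 0 ≤ ∫ x in x0 +ᵥ r • Ω, |u x| ^ q := integral_nonneg fun x => by positivity
  rcases hI.eq_or_lt with hI | hI
  · have hlam := lam_nonneg N p q s Ω
    rw [← hI, Real.zero_rpow (by positivity)]
    exact mul_nonneg (by positivity) (by linarith [gag_nonneg N p s u])
  have hlam : 0 < lam N p q s Ω :=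
    (hu.comp_add_smul hr).lam_pos hN hp hq hs0 hs1 hqc hΩ_fin <| by
      rw [hu.setIntegral_abs_comp_add_smul_rpow hq.ne' hr]
      positivity
  rw [div_mul_eq_mul_div, div_mul_eq_mul_div, le_div_iff₀' hlam, mul_comm 2, mul_assoc]
  exact (hu.lam_mul_rpow_le_rpow_mul_gag hp hq hr).trans (by gcongr)

end PrincipalFrequency

theorem stmt16 (N : ℕ) (hN : 0 < N) (p q s : ℝ) (hp : 1 ≤ p) (hs0 : 0 < s) (hs1 : s < 1)
    (hpq : p ≤ q) (hqc : s * p < N → q ≤ N * p / (N - s * p))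
    (x0 : Euc N) (r : ℝ) (hr : 0 < r)
    (u : Euc N → ℝ) (hu : TestOn (ball x0 r) u) :
    (∫ x in ball x0 r, |u x| ^ q) ^ (p / q) ≤
      2 / lam N p q s (ball (0 : Euc N) 1) * r ^ (s * p - N + N * p / q) *
        ∫ x in ball x0 r, ∫ y, |u x - u y| ^ p / ‖x - y‖ ^ ((N : ℝ) + s * p) := by
  rw [← affinity_unitBall hr x0] at hu ⊢
  exact stmt16_general hN (by linarith) (by linarith) hs0 hs1 hqc measurableSet_ball
    measure_ball_lt_top.ne x0 hr hu
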